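/- Let (ξ_n)_{n≥1} be i.i.d. integrable real random variables with E[ξ_1] > 0, let μ > 0, h ∈ [0,∞), A ≥ 0, and w ∈ [−h,∞), and let (W_n)_{n≥0} be the DE-CuSum sequence started at w with τ_A = inf{n ≥ 1 : W_n > A}. Then the expected total time the statistic spends below 0 before crossing the threshold satisfies E[#{n ≥ 0 : n < τ_A, W_n < 0}] ≤ ⌈h/μ⌉ / q, where q = ℙ(S_n ≥ 0 for all n ≥ 1). This bound does not depend on w or on the threshold A. -/

import Mathlib

open MeasureTheory Filter Set ProbabilityTheory
open scoped ENNReal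

/-- DE-CuSum sequence with parameters `μ > 0` and `h ∈ [0,∞)`, started at `w`:
`W_{n+1} = min (W_n + μ) 0` if `W_n < 0`, and `W_{n+1} = max (W_n + ξ_{n+1}) (-h)` if `W_n ≥ 0`. -/
noncomputable def deCusum (ξ : ℕ → ℝ) (μ h w : ℝ) : ℕ → ℝ
  | 0 => w
  | n + 1 =>
    if deCusum ξ μ h w n < 0 then min (deCusum ξ μ h w n + μ) 0
    else max (deCusum ξ μ h w n + ξ n) (-h)
/-- Partial sum `S_n = ξ_1 + ⋯ + ξ_n` (with the increments indexed from `0`), `S_0 = 0`. -/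
def psum (ξ : ℕ → ℝ) (n : ℕ) : ℝ := ∑ k ∈ Finset.range n, ξ k
/-- First time `n ≥ 1` at which `P n` holds, valued in `ℕ∞` with `inf ∅ = ∞`. -/
noncomputable def firstTime (P : ℕ → Prop) : ℕ∞ :=
  sInf ((↑) '' {n : ℕ | 1 ≤ n ∧ P n})

/-- The statistic is about to leave an episode below zero. -/
def exitAt (ξ : ℕ → ℝ) (μ h w : ℝ) (n : ℕ) : Prop :=
  deCusum ξ μ h w n < 0 ∧ 0 ≤ deCusum ξ μ h w n + μ

lemma deCusum_succ (ξ : ℕ → ℝ) (μ h w : ℝ) (n : ℕ) : deCusum ξ μ h w (n + 1) =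
    if deCusum ξ μ h w n < 0 then min (deCusum ξ μ h w n + μ) 0
    else max (deCusum ξ μ h w n + ξ n) (-h) := rfl

lemma deCusum_ge (ξ : ℕ → ℝ) (μ h w : ℝ) (hμ : 0 < μ) (hh : 0 ≤ h) (hw : -h ≤ w) (n : ℕ) :
    -h ≤ deCusum ξ μ h w n := by
  induction n with
  | zero => exact hw
  | succ n ih =>
    rw [deCusum_succ]
    split_ifs with hc
    · exact le_min (by linarith) (by linarith)
    · exact le_max_right _ _

lemma exists_exit (ξ : ℕ → ℝ) (μ h w : ℝ) (k : ℕ) : ∀ n, deCusum ξ μ h w n < 0 →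
    0 ≤ deCusum ξ μ h w n + k * μ → ∃ j < k, exitAt ξ μ h w (n + j) := by
  induction k with
  | zero => intro n h1 h2; simp at h2; linarith
  | succ k ih =>
    intro n h1 h2
    by_cases hc : 0 ≤ deCusum ξ μ h w n + μ
    · exact ⟨0, by omega, h1, hc⟩
    · push Not at hc
      have h3 : deCusum ξ μ h w (n + 1) = deCusum ξ μ h w n + μ := by
        rw [deCusum_succ, if_pos h1, min_eq_left hc.le]
      obtain ⟨j, hj, he⟩ := ih (n + 1) (by rw [h3]; exact hc)
        (by rw [h3]; push_cast at h2; linarith)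
      exact ⟨j + 1, by omega, by rwa [show n + (j + 1) = n + 1 + j by ring]⟩

lemma stays_nonneg (ξ : ℕ → ℝ) (μ h w : ℝ) (n : ℕ) (he : exitAt ξ μ h w n)
    (hf : ∀ m : ℕ, 1 ≤ m → 0 ≤ psum (fun k => ξ (n + 1 + k)) m) (m : ℕ) :
    0 ≤ deCusum ξ μ h w (n + 1 + m) := by
  have hf' : ∀ m : ℕ, 0 ≤ psum (fun k => ξ (n + 1 + k)) m := by
    intro m
    rcases m with _ | m
    · simp [psum]
    · exact hf _ (by omega)
  suffices hs : psum (fun k => ξ (n + 1 + k)) m ≤ deCusum ξ μ h w (n + 1 + m) from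
    (hf' m).trans hs
  induction m with
  | zero =>
    rw [add_zero, deCusum_succ, if_pos he.1, min_eq_right he.2]
    simp [psum]
  | succ m ih =>
    rw [← add_assoc, deCusum_succ, if_neg (not_lt.2 ((hf' m).trans ih))]
    refine le_max_of_le_left ?_
    simp only [psum] at ih ⊢
    rw [Finset.sum_range_succ]
    linarith

lemma deCusum_meas {Ω : Type*} (m : MeasurableSpace Ω) (ξ : ℕ → Ω → ℝ) (μ h w : ℝ) (n : ℕ)
    (hm : ∀ i < n, Measurable[m] (ξ i)) :
    Measurable[m] (fun ω => deCusum (fun k => ξ k ω) μ h w n) := by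
  induction n with
  | zero => exact measurable_const
  | succ n ih =>
    have hn := ih (fun i hi => hm i (by omega))
    simp only [deCusum_succ]
    exact Measurable.ite (measurableSet_lt hn measurable_const)
      ((hn.add_const μ).min measurable_const)
      ((hn.add (hm n (by omega))).max measurable_const)

lemma exit_meas {Ω : Type*} (m : MeasurableSpace Ω) (ξ : ℕ → Ω → ℝ) (μ h w : ℝ) (n : ℕ)
    (hm : ∀ i < n, Measurable[m] (ξ i)) :
    MeasurableSet[m] {ω | exitAt (fun k => ξ k ω) μ h w n} := by
  have hn := deCusum_meas m ξ μ h w n hm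
  exact (measurableSet_lt hn measurable_const).inter
    (measurableSet_le measurable_const (hn.add_const μ))

lemma fut_meas {Ω : Type*} (m : MeasurableSpace Ω) (ξ : ℕ → Ω → ℝ)
    (hm : ∀ i, Measurable[m] (ξ i)) :
    MeasurableSet[m] {ω | ∀ n : ℕ, 1 ≤ n → 0 ≤ psum (fun k => ξ k ω) n} := by
  simp only [setOf_forall]
  refine MeasurableSet.iInter fun n => MeasurableSet.iInter fun _ => ?_
  exact measurableSet_le measurable_const (Finset.measurable_fun_sum _ (fun i _ => hm i))

lemma sum_exit_le {Ω : Type*} [MeasurableSpace Ω] (P : Measure Ω)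
    [IsProbabilityMeasure P] (ξ : ℕ → Ω → ℝ) (hmeas : ∀ n, Measurable (ξ n))
    (hindep : iIndepFun ξ P)
    (hid : ∀ n, IdentDistrib (ξ n) (ξ 0) P P) (μ h w : ℝ) :
    ∑' n, P {ω | exitAt (fun k => ξ k ω) μ h w n} ≤
      (P {ω | ∀ n : ℕ, 1 ≤ n → 0 ≤ psum (fun k => ξ k ω) n})⁻¹ := by
  rw [ENNReal.le_inv_iff_mul_le, ← ENNReal.tsum_mul_right]
  set F : ℕ → Set Ω := fun n => {ω | ∀ m : ℕ, 1 ≤ m → 0 ≤ psum (fun k => ξ (n + 1 + k) ω) m}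
    with hF
  have hE : ∀ n, MeasurableSet {ω | exitAt (fun k => ξ k ω) μ h w n} := fun n =>
    exit_meas _ ξ μ h w n (fun i _ => hmeas i)
  have hFm : ∀ n, MeasurableSet (F n) := fun n =>
    fut_meas _ (fun k => ξ (n + 1 + k)) (fun i => hmeas _)
  have hPF : ∀ n, P (F n) = P {ω | ∀ n : ℕ, 1 ≤ n → 0 ≤ psum (fun k => ξ k ω) n} := by
    intro n
    have hd := IdentDistrib.pi (X := fun k => ξ (n + 1 + k)) (Y := ξ) (μ := P) (ν := P)
      (fun i => (hid _).trans (hid i).symm)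
      (hindep.precomp (g := fun k => n + 1 + k) (add_right_injective _)) hindep
    exact hd.measure_mem_eq
      (fut_meas (Ω := ℕ → ℝ) _ (fun k x => x k) (fun i => measurable_pi_apply i))
  have hprod : ∀ n, P {ω | exitAt (fun k => ξ k ω) μ h w n} *
      P {ω | ∀ n : ℕ, 1 ≤ n → 0 ≤ psum (fun k => ξ k ω) n} =
      P ({ω | exitAt (fun k => ξ k ω) μ h w n} ∩ F n) := by
    intro n
    rw [← hPF n]
    have hi := indep_iSup_of_disjoint (fun i => (hmeas i).comap_le) hindep
      (S := Set.Iio (n + 1)) (T := Set.Ici (n + 1)) (by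
        rw [Set.disjoint_left]; intro x hx hy; simp at hx hy; omega)
    have key : ∀ (S : Set ℕ) (i : ℕ), i ∈ S →
        Measurable[⨆ i ∈ S, MeasurableSpace.comap (ξ i) inferInstance] (ξ i) := by
      intro S i hS
      exact (comap_measurable (ξ i)).mono
        (le_iSup₂ (f := fun i (_ : i ∈ S) => MeasurableSpace.comap (ξ i) inferInstance) i hS)
        le_rfl
    refine (((Indep_iff _ _ _).1 hi) _ _ ?_ ?_).symm
    · exact exit_meas _ ξ μ h w n (fun i hi => key _ i (by simp; omega))
    · exact fut_meas _ (fun k => ξ (n + 1 + k)) (fun i => key _ _ (by simp))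
  simp only [hprod]
  refine (tsum_measure_le_measure_univ (fun n => ((hE n).inter (hFm n)).nullMeasurableSet)
    ?_).trans (by simp)
  have aux : ∀ i j, i < j → Disjoint ({ω | exitAt (fun k => ξ k ω) μ h w i} ∩ F i)
      ({ω | exitAt (fun k => ξ k ω) μ h w j} ∩ F j) := by
    intro i j hij
    rw [Set.disjoint_left]
    rintro ω ⟨h1, h2⟩ ⟨h3, -⟩
    obtain ⟨m, rfl⟩ := Nat.exists_eq_add_of_lt hij
    have := stays_nonneg (fun k => ξ k ω) μ h w i h1 h2 m
    have h4 := h3.1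
    rw [show i + m + 1 = i + 1 + m by ring] at h4
    exact absurd this (not_le.2 h4)
  intro i j hij
  refine Disjoint.aedisjoint ?_
  rcases lt_or_gt_of_ne hij with hl | hl
  · exact aux i j hl
  · exact (aux j i hl).symm

lemma count_le (ξ : ℕ → ℝ) (μ h w : ℝ) (hμ : 0 < μ) (hh : 0 ≤ h) (hw : -h ≤ w) (S : Set ℕ)
    (hS : ∀ n ∈ S, deCusum ξ μ h w n < 0) :
    (S.encard : ℝ≥0∞) ≤
      (⌈h / μ⌉₊ : ℝ≥0∞) * ∑' n, Set.indicator {n | exitAt ξ μ h w n} 1 n := by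
  classical
  set K := ⌈h / μ⌉₊ with hK
  set e : ℕ → ℝ≥0∞ := Set.indicator {n | exitAt ξ μ h w n} 1 with he
  have h1 : ∀ n, S.indicator (1 : ℕ → ℝ≥0∞) n ≤ ∑ j ∈ Finset.range K, e (n + j) := by
    intro n
    by_cases hn : n ∈ S
    · have hk : h ≤ K * μ := (div_le_iff₀ hμ).1 (Nat.le_ceil _)
      have := deCusum_ge ξ μ h w hμ hh hw n
      obtain ⟨j, hj, hx⟩ := exists_exit ξ μ h w K n (hS n hn) (by linarith)
      have h2 : e (n + j) = 1 := by
        rw [he, Set.indicator_of_mem (show n + j ∈ {n | exitAt ξ μ h w n} from hx)]; rfl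
      rw [Set.indicator_of_mem hn, Pi.one_apply, ← h2]
      exact Finset.single_le_sum (f := fun j => e (n + j)) (fun _ _ => zero_le)
        (Finset.mem_range.2 hj)
    · rw [Set.indicator_of_notMem hn]; exact zero_le
  calc (S.encard : ℝ≥0∞) = ∑' n, S.indicator (1 : ℕ → ℝ≥0∞) n := by
        rw [← ENNReal.tsum_set_one, ← tsum_subtype]; rfl
    _ ≤ ∑' n, ∑ j ∈ Finset.range K, e (n + j) := ENNReal.tsum_le_tsum h1
    _ = ∑ j ∈ Finset.range K, ∑' n, e (n + j) :=
        Summable.tsum_finsetSum (fun _ _ => ENNReal.summable)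
    _ ≤ ∑ j ∈ Finset.range K, ∑' n, e n := Finset.sum_le_sum fun j _ =>
        ENNReal.tsum_comp_le_tsum_of_injective (add_left_injective j) e
    _ = K * ∑' n, e n := by simp

/-- For i.i.d. integrable increments with positive mean, the expected total time the DE-CuSum
statistic (started at `w ∈ [-h,∞)`) spends below `0` before first exceeding the threshold
`A ≥ 0` is at most `⌈h/μ⌉ / q`, where `q = ℙ(S_n ≥ 0 for all n ≥ 1)`; the bound does not
depend on `w` or `A`. -/
theorem deCusum_time_below_zero_bound {Ω : Type*} [MeasurableSpace Ω] (P : Measure Ω)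
    [IsProbabilityMeasure P] (ξ : ℕ → Ω → ℝ) (hmeas : ∀ n, Measurable (ξ n))
    (hindep : iIndepFun ξ P)
    (hid : ∀ n, IdentDistrib (ξ n) (ξ 0) P P)
    (hint : Integrable (ξ 0) P) (hmean : 0 < ∫ ω, ξ 0 ω ∂P)
    (μ h w A : ℝ) (hμ : 0 < μ) (hh : 0 ≤ h) (hw : -h ≤ w) (hA : 0 ≤ A) :
    ∫⁻ ω, (Set.encard {n : ℕ |
        (n : ℕ∞) < firstTime (fun m => A < deCusum (fun k => ξ k ω) μ h w m) ∧
        deCusum (fun k => ξ k ω) μ h w n < 0} : ℝ≥0∞) ∂P ≤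
      (⌈h / μ⌉₊ : ℝ≥0∞) / P {ω | ∀ n : ℕ, 1 ≤ n → 0 ≤ psum (fun k => ξ k ω) n} := by
  set E : ℕ → Set Ω := fun n => {ω | exitAt (fun k => ξ k ω) μ h w n} with hEdef
  have hE : ∀ n, MeasurableSet (E n) := fun n =>
    exit_meas _ ξ μ h w n (fun i _ => hmeas i)
  have hm : ∀ n, Measurable ((E n).indicator (1 : Ω → ℝ≥0∞)) := fun n =>
    measurable_one.indicator (hE n)
  calc _ ≤ ∫⁻ ω, (⌈h / μ⌉₊ : ℝ≥0∞) * ∑' n, (E n).indicator (1 : Ω → ℝ≥0∞) ω ∂P := by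
        refine lintegral_mono fun ω => ?_
        refine (count_le (fun k => ξ k ω) μ h w hμ hh hw _ (fun n hn => hn.2)).trans (le_of_eq ?_)
        congr 1
    _ = (⌈h / μ⌉₊ : ℝ≥0∞) * ∑' n, P (E n) := by
        rw [lintegral_const_mul _ (Measurable.tsum hm), lintegral_tsum fun n => (hm n).aemeasurable]
        simp only [lintegral_indicator_one (hE _)]
    _ ≤ _ := by
        rw [ENNReal.div_eq_inv_mul, mul_comm]
        gcongr
        exact sum_exit_le P ξ hmeas hindep hid μ h w
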